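/- The entire function Z₁(s) has no zero in the region 1/2 < Re(s) < 20, |Im(s)| ≥ 25; that is, for every complex s with 1/2 < Re(s) < 20 and |Im(s)| ≥ 25 one has Z₁(s) ≠ 0. -/

import Mathlib

open Complex

noncomputable def chi (s : ℂ) : ℂ := s * (s - 1) * completedRiemannZeta₀ s + 1

noncomputable def A : ℂ := Real.pi / 3 - 1

noncomputable def f1 (s : ℂ) : ℂ :=
  (s - 1) * ((s - 1) * (3 * s - 2) * (A * s - A + 1) * chi (s + 1) * chi (3 * s)
    - (s + 1) * (s - 2) * chi s * chi (3 * s - 1)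
    - 2 * (s - 1) * (s - 2) * chi s * chi (3 * s))

noncomputable def f2 (s : ℂ) : ℂ :=
  (s - 2) * ((A * s + 3) * (s - 1) ^ 2 * chi (s + 2)
    - 2 * (s - 1) * (s - 3) * chi (s + 1)
    - (s + 2) * (s - 3) * chi s)

noncomputable def Z1 (s : ℂ) : ℂ := chi (2 * s) * f1 s - chi (2 * s - 1) * f1 (1 - s)

noncomputable def Z2 (s : ℂ) : ℂ := chi (2 * s) * f2 s - chi (2 * s - 1) * f2 (1 - s)

/-!
Let `R(s)` be the quotient of the two terms of `Z₁(s)`; it suffices that `|R(s)| < 1`.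

* `χ(s) = χ(1 - s)` and `χ(conj s) = conj χ(s)` give `|χ(w - a)| = |χ(w)|` on the line
  `Re w = (1 + a) / 2` and `|R| ≤ 1` on the line `Re s = 1/2`. By Phragmén–Lindelöf,
  `|χ(w - a)| ≤ |χ(w)|` for `a ≥ 1` to the right of the former line.
* For `Re w ≥ 5` the step `a = 1` gains a factor `√(10 / |w - 1|)`, because
  `|z| |Γ(z)|² ≤ exp (1 / (4 Re z)) |Γ(z + 1/2)|²`.
* For `|Im s| ≥ 17` these inequalities make `(s-1)²(3s-2)(As-A+1)χ(s+1)χ(3s)` the dominant term of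
  `f₁(s)`, whence `|R| ≤ 16` for `Re s ≥ 1/2` and `|R| ≤ 1/2` for `Re s ≥ 4`.
* The maximum principle for `exp (η (z - z₀)²) R(z)` on the rectangle `1/2 ≤ Re z ≤ 4`,
  `|Im (z - z₀)| ≤ 8` with `z₀ = 1/2 + i Im s` then gives `|R(s)| < 1` for `|Im s| ≥ 25`.
-/

open Set Filter Topology MeasureTheory ComplexConjugate
open scoped Real
open Real (pi_pos)

/-! ### Elementary estimates -/

lemma re_ofNat_mul (n : ℕ) [n.AtLeastTwo] (z : ℂ) : (ofNat(n) * z).re = ofNat(n) * z.re := by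
  rw [mul_re, re_ofNat, im_ofNat, zero_mul, sub_zero]

lemma mul_abs_im_le_norm_mul_sub (r : ℝ) (z : ℂ) (x : ℝ) : r * |z.im| ≤ ‖r * z - x‖ := by
  refine le_trans ?_ (abs_im_le_norm _)
  rw [sub_im, im_ofReal_mul, ofReal_im, sub_zero, abs_mul]
  gcongr
  exact le_abs_self r

lemma norm_le_mul_norm_of_sq_le {u v : ℂ} {c : ℝ} (hc : 0 ≤ c)
    (h : u.re ^ 2 + u.im ^ 2 ≤ c ^ 2 * (v.re ^ 2 + v.im ^ 2)) : ‖u‖ ≤ c * ‖v‖ := by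
  refine le_of_sq_le_sq ?_ (by positivity)
  rw [mul_pow, Complex.sq_norm, Complex.sq_norm, normSq_apply, normSq_apply]
  linarith

lemma le_norm_of_sq_le {u : ℂ} {c : ℝ} (h : c ^ 2 ≤ u.re ^ 2 + u.im ^ 2) : c ≤ ‖u‖ := by
  refine le_of_sq_le_sq ?_ (norm_nonneg _)
  rwa [Complex.sq_norm, normSq_apply, ← sq, ← sq]

lemma sq_le_sq_of_le_abs {x y : ℝ} (hx : 0 ≤ x) (hxy : x ≤ |y|) : x ^ 2 ≤ y ^ 2 :=
  sq_le_sq.2 (by rwa [abs_of_nonneg hx])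

lemma norm_sub_ofReal_le_norm {w : ℂ} {a : ℝ} (ha : 0 ≤ a) (hw : a ≤ 2 * w.re) :
    ‖w - a‖ ≤ ‖w‖ := by
  rw [← sq_le_sq₀ (norm_nonneg _) (norm_nonneg _), Complex.sq_norm, Complex.sq_norm,
    normSq_apply, normSq_apply]
  simp only [sub_re, ofReal_re, sub_im, ofReal_im, sub_zero]
  nlinarith

/-! ### Maximum principle on a rectangle -/

lemma norm_le_of_forall_mem_boundary_rect {E : Type*} [NormedAddCommGroup E] [NormedSpace ℂ E]
    {f : ℂ → E} {a b c d C : ℝ} (hab : a < b) (hcd : c < d)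
    (hf : DifferentiableOn ℂ f (Icc a b ×ℂ Icc c d))
    (hre : ∀ z ∈ ({a, b} : Set ℝ) ×ℂ Icc c d, ‖f z‖ ≤ C)
    (him : ∀ z ∈ Icc a b ×ℂ ({c, d} : Set ℝ), ‖f z‖ ≤ C)
    {z : ℂ} (hz : z ∈ Icc a b ×ℂ Icc c d) : ‖f z‖ ≤ C := by
  have closure_eq : closure (Ioo a b ×ℂ Ioo c d) = Icc a b ×ℂ Icc c d := by
    rw [closure_reProdIm, closure_Ioo hab.ne, closure_Ioo hcd.ne]
  refine norm_le_of_forall_mem_frontier_norm_le (U := Ioo a b ×ℂ Ioo c d)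
    ((Metric.isBounded_Ioo a b).reProdIm (Metric.isBounded_Ioo c d))
    (DifferentiableOn.diffContOnCl (closure_eq ▸ hf)) (fun w hw ↦ ?_) (closure_eq ▸ hz)
  rw [frontier_reProdIm, closure_Ioo hab.ne, closure_Ioo hcd.ne, frontier_Ioo hab,
    frontier_Ioo hcd] at hw
  exact hw.elim (him w) (hre w)

-- Multiplying `f` by `exp (η (z - z₀)²)` damps the horizontal sides by `exp (-η T²)`, at the cost
-- of a factor `exp (η d²)` on the right side.
lemma norm_le_exp_of_rect {E : Type*} [NormedAddCommGroup E] [NormedSpace ℂ E] {f : ℂ → E}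
    {m d t T η : ℝ} (hd : 0 < d) (hT : 0 < T) (hη : 0 ≤ η)
    (hf : DifferentiableOn ℂ f (Icc m (m + d) ×ℂ Icc (t - T) (t + T)))
    (left : ∀ z ∈ {m} ×ℂ Icc (t - T) (t + T), ‖f z‖ ≤ 1)
    (right : ∀ z ∈ {m + d} ×ℂ Icc (t - T) (t + T), ‖f z‖ ≤ Real.exp (-(η * d ^ 2)))
    (horizontal : ∀ z ∈ Icc m (m + d) ×ℂ {t - T, t + T},
      ‖f z‖ ≤ Real.exp (η * (T ^ 2 - d ^ 2)))
    {s : ℂ} (hs : s.re ∈ Icc m (m + d)) (hst : s.im = t) :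
    ‖f s‖ ≤ Real.exp (-(η * (s.re - m) ^ 2)) := by
  have norm_weighted (z : ℂ) : ‖exp (η * (z - (m + t * I)) ^ 2) • f z‖ =
      Real.exp (η * ((z.re - m) ^ 2 - (z.im - t) ^ 2)) * ‖f z‖ := by
    rw [norm_smul, norm_exp, re_ofReal_mul, sq, mul_re, ← sq, ← sq]
    simp
  have weighted_le {z : ℂ} {u : ℝ} (hu : ‖f z‖ ≤ Real.exp u)
      (hu0 : η * ((z.re - m) ^ 2 - (z.im - t) ^ 2) + u ≤ 0) :
      ‖exp (η * (z - (m + t * I)) ^ 2) • f z‖ ≤ 1 := by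
    rw [norm_weighted]
    calc _ ≤ Real.exp (η * ((z.re - m) ^ 2 - (z.im - t) ^ 2)) * Real.exp u := by gcongr
      _ ≤ 1 := by rwa [← Real.exp_add, Real.exp_le_one_iff]
  have weighted_s := norm_le_of_forall_mem_boundary_rect (z := s) (C := 1)
    (f := fun z ↦ exp (η * (z - (m + t * I)) ^ 2) • f z) (by linarith : m < m + d)
    (by linarith : t - T < t + T) (DifferentiableOn.smul (by fun_prop) hf)
    (fun z hz ↦ ?_) (fun z hz ↦ ?_) ⟨hs, by constructor <;> linarith⟩
  · rw [norm_weighted, hst, sub_self, ← le_div_iff₀' (Real.exp_pos _)] at weighted_s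
    simpa [Real.exp_neg] using weighted_s
  · rcases hz with ⟨hz_re | hz_re, hz_im⟩
    · refine weighted_le (u := 0) (by simpa using left z ⟨hz_re, hz_im⟩) ?_
      rw [show z.re = m from hz_re]
      nlinarith [mul_nonneg hη (sq_nonneg (z.im - t))]
    · refine weighted_le (right z ⟨hz_re, hz_im⟩) ?_
      rw [show z.re = m + d from hz_re]
      nlinarith [mul_nonneg hη (sq_nonneg (z.im - t))]
  · refine weighted_le (horizontal z hz) ?_
    have im_sq : (z.im - t) ^ 2 = T ^ 2 := by
      rcases hz.2 with h | h <;> rw [show z.im = _ from h] <;> ring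
    have re_sq : (z.re - m) ^ 2 ≤ d ^ 2 :=
      pow_le_pow_left₀ (by linarith [hz.1.1]) (by linarith [hz.1.2]) 2
    rw [im_sq]
    nlinarith [mul_le_mul_of_nonneg_left re_sq hη]

/-! ### Gamma function -/

lemma norm_betaIntegral_le {u v : ℂ} (hu : 0 < u.re) (hv : 0 < v.re) :
    ‖betaIntegral u v‖ ≤ ‖betaIntegral u.re v.re‖ := by
  have norm_integrand {x : ℝ} (hx : x ∈ Ioo (0 : ℝ) 1) (p q : ℂ) :
      ‖(x : ℂ) ^ (p - 1) * (1 - (x : ℂ)) ^ (q - 1)‖ = x ^ (p.re - 1) * (1 - x) ^ (q.re - 1) := by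
    rw [norm_mul, norm_cpow_eq_rpow_re_of_pos hx.1, ← ofReal_one, ← ofReal_sub,
      norm_cpow_eq_rpow_re_of_pos (sub_pos.2 hx.2)]
    simp
  have integral_eq : betaIntegral u.re v.re =
      ((∫ x : ℝ in 0..1, x ^ (u.re - 1) * (1 - x) ^ (v.re - 1) : ℝ) : ℂ) := by
    rw [betaIntegral, ← intervalIntegral.integral_ofReal]
    refine intervalIntegral.integral_congr fun x hx ↦ ?_
    rw [uIcc_of_le zero_le_one] at hx
    push_cast [ofReal_cpow hx.1, ofReal_cpow (sub_nonneg.2 hx.2)]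
    rfl
  have integrable := (betaIntegral_convergent (u := u.re) (v := v.re) hu hv).norm
  rw [integral_eq, norm_real]
  refine le_trans ?_ (Real.le_norm_self _)
  rw [intervalIntegrable_iff_integrableOn_Ioo_of_le zero_le_one] at integrable
  simp only [betaIntegral, intervalIntegral.integral_of_le zero_le_one,
    integral_Ioc_eq_integral_Ioo]
  refine norm_integral_le_of_norm_le (integrable.congr_fun (fun x hx ↦ ?_) measurableSet_Ioo)
    ((ae_restrict_iff' measurableSet_Ioo).2 (ae_of_all _ fun x hx ↦ (norm_integrand hx u v).le))
  simpa using norm_integrand hx u.re v.re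

lemma norm_Gamma_mul_Gamma_re_add_le {z : ℂ} {b : ℝ} (hz : 0 < z.re) (hb : 0 ≤ b) :
    ‖Gamma z‖ * Real.Gamma (z.re + b) ≤ Real.Gamma z.re * ‖Gamma (z + b)‖ := by
  rcases hb.eq_or_lt with rfl | hb
  · simp [mul_comm]
  have norm_Gamma_ofReal {x : ℝ} (hx : 0 < x) : ‖Gamma x‖ = Real.Gamma x := by
    rw [Gamma_ofReal, norm_real, Real.norm_of_nonneg (Real.Gamma_pos_of_pos hx).le]
  have beta_z := congrArg norm (Gamma_mul_Gamma_eq_betaIntegral hz (t := b) hb)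
  have beta_re := congrArg norm (Gamma_mul_Gamma_eq_betaIntegral (s := z.re) hz (t := b) hb)
  rw [norm_mul, norm_mul, norm_Gamma_ofReal hb] at beta_z
  rw [norm_mul, norm_mul, norm_Gamma_ofReal hb, norm_Gamma_ofReal hz, ← ofReal_add,
    norm_Gamma_ofReal (by positivity)] at beta_re
  have beta_le : ‖betaIntegral z b‖ ≤ ‖betaIntegral z.re b‖ := norm_betaIntegral_le hz (v := b) hb
  have Gamma_b_pos := Real.Gamma_pos_of_pos hb
  have := Real.Gamma_pos_of_pos (add_pos hz hb)
  refine le_of_mul_le_mul_right ?_ Gamma_b_pos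
  calc ‖Gamma z‖ * Real.Gamma (z.re + b) * Real.Gamma b
      = ‖Gamma (z + b)‖ * ‖betaIntegral z b‖ * Real.Gamma (z.re + b) := by rw [← beta_z]; ring
    _ ≤ ‖Gamma (z + b)‖ * ‖betaIntegral z.re b‖ * Real.Gamma (z.re + b) := by gcongr
    _ = Real.Gamma z.re * ‖Gamma (z + b)‖ * Real.Gamma b := by
        linear_combination -‖Gamma (z + b)‖ * beta_re

lemma norm_Gamma_sq_mul_cosh {z : ℂ} (hz : z.re = 1 / 2) :
    ‖Gamma z‖ ^ 2 * Real.cosh (π * z.im) = π := by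
  have z_eq : z = 1 / 2 + z.im * I := by
    apply Complex.ext <;> simp [hz]
  have one_sub_z : 1 - z = conj z := by
    apply Complex.ext <;> simp [hz]; norm_num
  have sin_pi_z : sin (π * z) = (Real.cosh (π * z.im) : ℝ) := by
    rw [ofReal_cosh, ← cos_mul_I, ← sin_add_pi_div_two]
    congr 1
    nth_rewrite 1 [z_eq]
    push_cast
    ring
  have reflection := congrArg norm (Gamma_mul_Gamma_one_sub z)
  rw [one_sub_z, Gamma_conj, norm_mul, norm_conj, sin_pi_z, norm_div, norm_real, norm_real,
    Real.norm_of_nonneg pi_pos.le, Real.norm_of_nonneg (Real.cosh_pos _).le,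
    eq_div_iff (Real.cosh_pos _).ne'] at reflection
  rw [sq, reflection]

lemma Gamma_re_le_norm_Gamma_mul_exp {z : ℂ} (hz : 1 / 2 ≤ z.re) :
    Real.Gamma z.re ≤ ‖Gamma z‖ * Real.exp (π * |z.im| / 2) := by
  set c : ℂ := z - (z.re - 1 / 2 : ℝ) with hc
  have c_re : c.re = 1 / 2 := by simp [hc]
  have c_im : c.im = z.im := by simp [hc]
  have cosh_le : Real.cosh (π * z.im) ≤ Real.exp (π * |z.im| / 2) ^ 2 := by
    rw [← Real.cosh_abs, abs_mul, abs_of_pos pi_pos, ← Real.exp_nat_mul, Real.cosh_eq]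
    have : Real.exp (-(π * |z.im|)) ≤ Real.exp (π * |z.im|) :=
      Real.exp_le_exp.2 (neg_le_self (by positivity))
    ring_nf at this ⊢
    linarith
  have sqrt_pi_le : √π ≤ ‖Gamma c‖ * Real.exp (π * |z.im| / 2) := by
    refine Real.sqrt_le_iff.2 ⟨by positivity, ?_⟩
    calc π = ‖Gamma c‖ ^ 2 * Real.cosh (π * z.im) := by
          rw [← c_im, norm_Gamma_sq_mul_cosh c_re]
      _ ≤ ‖Gamma c‖ ^ 2 * Real.exp (π * |z.im| / 2) ^ 2 := by gcongr
      _ = _ := by rw [mul_pow]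
  have beta_bound := norm_Gamma_mul_Gamma_re_add_le (z := c) (b := z.re - 1 / 2)
    (by rw [c_re]; norm_num) (by linarith)
  rw [c_re, Real.Gamma_one_half_eq, show 1 / 2 + (z.re - 1 / 2) = z.re by ring,
    show c + (z.re - 1 / 2 : ℝ) = z by simp [hc]] at beta_bound
  have := Real.Gamma_pos_of_pos (show 0 < z.re by linarith)
  refine le_of_mul_le_mul_left ?_ (Real.sqrt_pos.2 pi_pos)
  calc √π * Real.Gamma z.re
      ≤ ‖Gamma c‖ * Real.exp (π * |z.im| / 2) * Real.Gamma z.re := by gcongr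
    _ = ‖Gamma c‖ * Real.Gamma z.re * Real.exp (π * |z.im| / 2) := by ring
    _ ≤ √π * ‖Gamma z‖ * Real.exp (π * |z.im| / 2) := by gcongr
    _ = _ := by ring

/-- The quotient `|z| |Γ(z)|² / |Γ(z + 1/2)|²`, which measures the error in the approximation
`Γ(z + 1/2) ≈ √z Γ(z)`. -/
noncomputable def gammaHalfRatio (z : ℂ) : ℝ :=
  ‖z‖ * ‖Gamma z‖ ^ 2 / ‖Gamma (z + 1 / 2)‖ ^ 2

lemma norm_add_half_sq_le {z : ℂ} (hz : 0 < z.re) :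
    ‖z + 1 / 2‖ ^ 2 ≤ ‖z‖ * ‖z + 1‖ * Real.exp (1 / 4 * (1 / z.re - 1 / (z.re + 1))) := by
  have norm_sq_le : ‖z + 1 / 2‖ ^ 2 ≤ ‖z‖ * ‖z + 1‖ + 1 / 4 := by
    rw [← norm_pow, ← norm_mul, show (z + 1 / 2) ^ 2 = z * (z + 1) + 1 / 4 by ring]
    exact (norm_add_le _ _).trans_eq (by norm_num)
  have re_le : z.re * (z.re + 1) ≤ ‖z‖ * ‖z + 1‖ := by
    gcongr
    · exact re_le_norm z
    · simpa using re_le_norm (z + 1)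
  have re_pos : 0 < z.re * (z.re + 1) := by positivity
  calc ‖z + 1 / 2‖ ^ 2 ≤ ‖z‖ * ‖z + 1‖ + 1 / 4 := norm_sq_le
    _ ≤ ‖z‖ * ‖z + 1‖ + 1 / 4 * (‖z‖ * ‖z + 1‖ / (z.re * (z.re + 1))) := by
        have := (one_le_div re_pos).2 re_le
        linarith
    _ = ‖z‖ * ‖z + 1‖ * (1 / 4 * (1 / z.re - 1 / (z.re + 1)) + 1) := by field_simp; ring
    _ ≤ _ := by gcongr; exact Real.add_one_le_exp _

lemma gammaHalfRatio_le_add_one {z : ℂ} (hz : 0 < z.re) :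
    gammaHalfRatio z ≤
      gammaHalfRatio (z + 1) * Real.exp (1 / 4 * (1 / z.re - 1 / (z.re + 1))) := by
  have half_re : 0 < (z + 1 / 2).re := add_pos hz (by norm_num : 0 < (1 / 2 : ℂ).re)
  have z_ne : z ≠ 0 := ne_zero_of_re_pos hz
  have half_ne : z + 1 / 2 ≠ 0 := ne_zero_of_re_pos half_re
  have Gamma_half_pos := norm_pos_iff.2 (Gamma_ne_zero_of_re_pos half_re)
  have := norm_pos_iff.2 half_ne
  rw [gammaHalfRatio, gammaHalfRatio, Gamma_add_one z z_ne,
    show z + 1 + 1 / 2 = z + 1 / 2 + 1 by ring, Gamma_add_one _ half_ne, norm_mul, norm_mul,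
    div_mul_eq_mul_div, div_le_div_iff₀ (by positivity) (by positivity)]
  calc ‖z‖ * ‖Gamma z‖ ^ 2 * (‖z + 1 / 2‖ * ‖Gamma (z + 1 / 2)‖) ^ 2
      = ‖z‖ * ‖Gamma z‖ ^ 2 * ‖Gamma (z + 1 / 2)‖ ^ 2 * ‖z + 1 / 2‖ ^ 2 := by ring
    _ ≤ ‖z‖ * ‖Gamma z‖ ^ 2 * ‖Gamma (z + 1 / 2)‖ ^ 2 *
          (‖z‖ * ‖z + 1‖ * Real.exp (1 / 4 * (1 / z.re - 1 / (z.re + 1)))) := by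
        gcongr; exact norm_add_half_sq_le hz
    _ = _ := by ring

lemma gammaHalfRatio_le_add_nat {z : ℂ} (hz : 0 < z.re) (n : ℕ) :
    gammaHalfRatio z ≤
      gammaHalfRatio (z + n) * Real.exp (1 / 4 * (1 / z.re - 1 / (z.re + n))) := by
  induction n with
  | zero => simp
  | succ n ih =>
    have step := gammaHalfRatio_le_add_one (z := z + n) (by rw [add_re, natCast_re]; positivity)
    rw [add_re, natCast_re] at step
    calc gammaHalfRatio z
        ≤ gammaHalfRatio (z + n) * Real.exp (1 / 4 * (1 / z.re - 1 / (z.re + n))) := ih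
      _ ≤ gammaHalfRatio (z + n + 1) *
            Real.exp (1 / 4 * (1 / (z.re + n) - 1 / (z.re + n + 1))) *
            Real.exp (1 / 4 * (1 / z.re - 1 / (z.re + n))) := by gcongr
      _ = gammaHalfRatio (z + (n + 1 : ℕ)) *
            Real.exp (1 / 4 * (1 / z.re - 1 / (z.re + (n + 1 : ℕ)))) := by
          rw [mul_assoc, ← Real.exp_add]
          push_cast
          ring_nf

lemma sq_mul_Gamma_sq_le {x : ℝ} (hx : 0 < x) :
    x ^ 2 * Real.Gamma x ^ 2 ≤ (x + 1 / 2) * Real.Gamma (x + 1 / 2) ^ 2 := by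
  have log_convex := Real.Gamma_mul_add_mul_le_rpow_Gamma_mul_rpow_Gamma (s := x + 1 / 2)
    (t := x + 1 / 2 + 1) (a := 1 / 2) (b := 1 / 2) (by positivity) (by positivity)
    (by norm_num) (by norm_num) (by norm_num)
  have half_pos : 0 < x + 1 / 2 := by positivity
  have Gamma_half_pos := Real.Gamma_pos_of_pos half_pos
  rw [show 1 / 2 * (x + 1 / 2) + 1 / 2 * (x + 1 / 2 + 1) = x + 1 by ring,
    Real.Gamma_add_one hx.ne', Real.Gamma_add_one half_pos.ne', ← Real.sqrt_eq_rpow,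
    ← Real.sqrt_eq_rpow, ← Real.sqrt_mul Gamma_half_pos.le] at log_convex
  calc x ^ 2 * Real.Gamma x ^ 2 = (x * Real.Gamma x) ^ 2 := by ring
    _ ≤ Real.Gamma (x + 1 / 2) * ((x + 1 / 2) * Real.Gamma (x + 1 / 2)) :=
        (Real.le_sqrt (by have := Real.Gamma_pos_of_pos hx; positivity) (by positivity)).1
          log_convex
    _ = _ := by ring

lemma gammaHalfRatio_le_of_re_pos {z : ℂ} (hz : 0 < z.re) :
    gammaHalfRatio z ≤ (1 + |z.im| / z.re) * (1 + 1 / 2 / z.re) := by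
  have Gamma_half_pos : 0 < ‖Gamma (z + 1 / 2)‖ :=
    norm_pos_iff.2 (Gamma_ne_zero_of_re_pos (add_pos hz (by norm_num : 0 < (1 / 2 : ℂ).re)))
  have real_half_pos := Real.Gamma_pos_of_pos (show 0 < z.re + 1 / 2 by positivity)
  have beta_bound := norm_Gamma_mul_Gamma_re_add_le hz (b := 1 / 2) (by norm_num)
  push_cast at beta_bound
  have Gamma_sq_le : z.re ^ 2 * ‖Gamma z‖ ^ 2 ≤ (z.re + 1 / 2) * ‖Gamma (z + 1 / 2)‖ ^ 2 := by
    refine le_of_mul_le_mul_right ?_ (pow_pos real_half_pos 2)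
    calc z.re ^ 2 * ‖Gamma z‖ ^ 2 * Real.Gamma (z.re + 1 / 2) ^ 2
        = z.re ^ 2 * (‖Gamma z‖ * Real.Gamma (z.re + 1 / 2)) ^ 2 := by ring
      _ ≤ z.re ^ 2 * (Real.Gamma z.re * ‖Gamma (z + 1 / 2)‖) ^ 2 := by gcongr
      _ = z.re ^ 2 * Real.Gamma z.re ^ 2 * ‖Gamma (z + 1 / 2)‖ ^ 2 := by ring
      _ ≤ (z.re + 1 / 2) * Real.Gamma (z.re + 1 / 2) ^ 2 * ‖Gamma (z + 1 / 2)‖ ^ 2 :=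
          mul_le_mul_of_nonneg_right (sq_mul_Gamma_sq_le hz) (sq_nonneg _)
      _ = _ := by ring
  have norm_le : ‖z‖ ≤ z.re + |z.im| := by
    simpa [abs_of_pos hz] using norm_le_abs_re_add_abs_im z
  rw [gammaHalfRatio, div_le_iff₀ (by positivity)]
  refine le_of_mul_le_mul_left ?_ (pow_pos hz 2)
  calc z.re ^ 2 * (‖z‖ * ‖Gamma z‖ ^ 2) = ‖z‖ * (z.re ^ 2 * ‖Gamma z‖ ^ 2) := by ring
    _ ≤ (z.re + |z.im|) * ((z.re + 1 / 2) * ‖Gamma (z + 1 / 2)‖ ^ 2) := by gcongr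
    _ = _ := by field_simp

lemma gammaHalfRatio_le_exp {z : ℂ} (hz : 0 < z.re) :
    gammaHalfRatio z ≤ Real.exp (1 / (4 * z.re)) := by
  have tendsto_re : Tendsto (fun n : ℕ ↦ z.re + n) atTop atTop :=
    tendsto_atTop_add_const_left _ _ tendsto_natCast_atTop_atTop
  have tendsto_bound : Tendsto (fun n : ℕ ↦ (1 + |z.im| / (z.re + n)) * (1 + 1 / 2 / (z.re + n)) *
      Real.exp (1 / (4 * z.re))) atTop (𝓝 (Real.exp (1 / (4 * z.re)))) := by
    simpa using (((tendsto_re.const_div_atTop |z.im|).const_add 1).mul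
      ((tendsto_re.const_div_atTop (1 / 2)).const_add 1)).mul_const (Real.exp (1 / (4 * z.re)))
  refine ge_of_tendsto' tendsto_bound fun n ↦ (gammaHalfRatio_le_add_nat hz n).trans ?_
  have shifted := gammaHalfRatio_le_of_re_pos (z := z + n) (by rw [add_re, natCast_re]; positivity)
  simp only [add_re, natCast_re, add_im, natCast_im, add_zero] at shifted
  have exponent_le : 1 / 4 * (1 / z.re - 1 / (z.re + n)) ≤ 1 / (4 * z.re) := by
    have : 0 ≤ 1 / (z.re + n) := by positivity
    calc _ ≤ 1 / 4 * (1 / z.re) := by linarith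
      _ = _ := by field_simp
  gcongr

lemma norm_Gammaℝ (s : ℂ) : ‖Gammaℝ s‖ = π ^ (-s.re / 2) * ‖Gamma (s / 2)‖ := by
  rw [Gammaℝ_def, norm_mul, norm_cpow_eq_rpow_re_of_pos pi_pos]
  simp

lemma norm_Gammaℝ_sub {s : ℂ} (a : ℝ) :
    ‖Gammaℝ (s - a)‖ = π ^ (a / 2) * (π ^ (-s.re / 2) * ‖Gamma ((s - a) / 2)‖) := by
  rw [norm_Gammaℝ, ← mul_assoc, ← Real.rpow_add pi_pos, sub_re, ofReal_re]
  ring_nf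

lemma Gammaℝ_conj (s : ℂ) : Gammaℝ (conj s) = conj (Gammaℝ s) := by
  have arg_pi_ne : (π : ℂ).arg ≠ π := by
    rw [arg_ofReal_of_nonneg pi_pos.le]; exact pi_pos.ne
  have pi_cpow := cpow_conj (π : ℂ) (-s / 2) arg_pi_ne
  rw [conj_ofReal] at pi_cpow
  rw [Gammaℝ_def, Gammaℝ_def, map_mul, ← pi_cpow, ← Gamma_conj]
  simp only [map_div₀, map_neg, map_ofNat]

lemma norm_Gammaℝ_re_le {s : ℂ} (hs : 1 ≤ s.re) :
    ‖Gammaℝ s.re‖ ≤ ‖Gammaℝ s‖ * Real.exp |s.im| := by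
  have half_re : (s / 2).re = s.re / 2 := by simp
  have Gamma_bound := Gamma_re_le_norm_Gamma_mul_exp (z := s / 2) (by rw [half_re]; linarith)
  have Gamma_half_re : ‖Gamma ((s.re : ℂ) / 2)‖ = Real.Gamma (s / 2).re := by
    rw [half_re, ← ofReal_ofNat, ← ofReal_div, Gamma_ofReal, norm_real,
      Real.norm_of_nonneg (Real.Gamma_pos_of_pos (by linarith)).le]
  have exp_le : Real.exp (π * |(s / 2).im| / 2) ≤ Real.exp |s.im| := by
    refine Real.exp_le_exp.2 ?_
    have : |(s / 2).im| = |s.im| / 2 := by simp [abs_div]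
    rw [this]
    nlinarith [Real.pi_le_four, abs_nonneg s.im]
  rw [norm_Gammaℝ, norm_Gammaℝ, ofReal_re, Gamma_half_re, mul_assoc]
  gcongr
  exact Gamma_bound.trans (by gcongr)

lemma exists_norm_inv_Gammaℝ_le (M : ℝ) : ∃ C : ℝ, 0 ≤ C ∧
    ∀ s : ℂ, 1 ≤ s.re → s.re ≤ M → ‖(Gammaℝ s)⁻¹‖ ≤ C * Real.exp |s.im| := by
  have continuous_inv : Continuous fun x : ℝ ↦ (Gammaℝ x)⁻¹ :=
    differentiable_Gammaℝ_inv.continuous.comp continuous_ofReal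
  obtain ⟨C, hC⟩ := isCompact_Icc.exists_bound_of_continuousOn
    (continuous_inv.continuousOn (s := Icc 1 M))
  refine ⟨|C|, abs_nonneg C, fun s hs hsM ↦ ?_⟩
  have Gammaℝ_pos : 0 < ‖Gammaℝ s‖ := norm_pos_iff.2 (Gammaℝ_ne_zero_of_re_pos (by linarith))
  have Gammaℝ_re_pos : 0 < ‖Gammaℝ s.re‖ :=
    norm_pos_iff.2 (Gammaℝ_ne_zero_of_re_pos (by rw [ofReal_re]; linarith))
  have inv_le := (hC s.re ⟨hs, hsM⟩).trans (le_abs_self C)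
  rw [norm_inv] at inv_le ⊢
  calc ‖Gammaℝ s‖⁻¹ ≤ ‖Gammaℝ s.re‖⁻¹ * Real.exp |s.im| := by
        rw [inv_mul_eq_div, le_div_iff₀ Gammaℝ_re_pos, inv_mul_le_iff₀ Gammaℝ_pos]
        exact norm_Gammaℝ_re_le hs
    _ ≤ |C| * Real.exp |s.im| := by gcongr

lemma norm_Gammaℝ_sub_le {s : ℂ} {a : ℝ} (ha : 0 ≤ a) (hs : a + 4 ≤ s.re) :
    ‖Gammaℝ (s - a)‖ ≤ π ^ (a / 2) * ‖Gammaℝ s‖ := by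
  have shifted_re : ((s - a) / 2).re = (s.re - a) / 2 := by simp
  have beta_bound := norm_Gamma_mul_Gamma_re_add_le (z := (s - a) / 2) (b := a / 2)
    (by rw [shifted_re]; linarith) (by linarith)
  rw [shifted_re, show (s - a) / 2 + (a / 2 : ℝ) = s / 2 by push_cast; ring,
    show (s.re - a) / 2 + a / 2 = s.re / 2 by ring] at beta_bound
  have Gamma_mono : Real.Gamma ((s.re - a) / 2) ≤ Real.Gamma (s.re / 2) :=
    Real.Gamma_strictMonoOn_Ici.monotoneOn (mem_Ici.2 (by linarith)) (mem_Ici.2 (by linarith))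
      (by linarith)
  have Gamma_le : ‖Gamma ((s - a) / 2)‖ ≤ ‖Gamma (s / 2)‖ :=
    le_of_mul_le_mul_right ((beta_bound.trans (by gcongr)).trans_eq (mul_comm _ _))
      (Real.Gamma_pos_of_pos (show 0 < s.re / 2 by linarith))
  rw [norm_Gammaℝ_sub, norm_Gammaℝ s]
  gcongr

lemma norm_Gammaℝ_sub_one_sq_le {s : ℂ} (hs : 1 < s.re) :
    ‖Gammaℝ (s - 1)‖ ^ 2 * ‖s - 1‖ ≤
      2 * π * Real.exp (1 / (2 * (s.re - 1))) * ‖Gammaℝ s‖ ^ 2 := by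
  have shifted_re : ((s - 1) / 2).re = (s.re - 1) / 2 := by simp
  have ratio_le := gammaHalfRatio_le_exp (z := (s - 1) / 2) (by rw [shifted_re]; linarith)
  have Gamma_pos : 0 < ‖Gamma (s / 2)‖ :=
    norm_pos_iff.2 (Gamma_ne_zero_of_re_pos (by rw [div_ofNat_re]; linarith))
  rw [gammaHalfRatio, shifted_re, show (s - 1) / 2 + 1 / 2 = s / 2 by ring,
    div_le_iff₀ (by positivity), norm_div, norm_ofNat,
    show 4 * ((s.re - 1) / 2) = 2 * (s.re - 1) by ring] at ratio_le
  have Gammaℝ_eq := norm_Gammaℝ_sub (s := s) 1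
  rw [ofReal_one, ← Real.sqrt_eq_rpow] at Gammaℝ_eq
  rw [Gammaℝ_eq, norm_Gammaℝ]
  calc _ = 2 * π * (π ^ (-s.re / 2)) ^ 2 *
          (‖s - 1‖ / 2 * ‖Gamma ((s - 1) / 2)‖ ^ 2) := by
        rw [mul_pow, Real.sq_sqrt pi_pos.le]; ring
    _ ≤ 2 * π * (π ^ (-s.re / 2)) ^ 2 *
          (Real.exp (1 / (2 * (s.re - 1))) * ‖Gamma (s / 2)‖ ^ 2) := by gcongr
    _ = _ := by ring

/-! ### Riemann zeta function -/

open scoped ComplexOrder in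
lemma norm_LSeries_le_norm_riemannZeta {g : ℕ → ℂ} (hg : ∀ n, ‖g n‖ ≤ 1) {s : ℂ} {x : ℝ}
    (hx : 1 < x) (hxs : x ≤ s.re) : ‖LSeries g s‖ ≤ ‖riemannZeta x‖ := by
  have summable_norm : Summable fun n ↦ ‖LSeries.term 1 x n‖ :=
    (LSeriesSummable_one_iff.2 (by rwa [ofReal_re])).norm
  have term_eq (n : ℕ) : LSeries.term 1 x n = (‖LSeries.term 1 x n‖ : ℝ) :=
    eq_coe_norm_of_nonneg (LSeries.term_nonneg zero_le_one x)
  have zeta_eq : riemannZeta x = (∑' n, ‖LSeries.term 1 x n‖ : ℝ) := by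
    rw [← LSeries_one_eq_riemannZeta (s := x) hx, LSeries, ofReal_tsum]
    exact tsum_congr term_eq
  have zeta_norm : ‖riemannZeta x‖ = ∑' n, ‖LSeries.term 1 x n‖ := by
    rw [zeta_eq, norm_real, Real.norm_of_nonneg (tsum_nonneg fun _ ↦ norm_nonneg _)]
  rw [zeta_norm]
  exact tsum_of_norm_bounded summable_norm.hasSum fun n ↦
    (LSeries.norm_term_le s (by simpa using hg n)).trans
      (LSeries.norm_term_le_of_re_le_re 1 (s := x) hxs n)

lemma norm_riemannZeta_le {s : ℂ} {x : ℝ} (hx : 1 < x) (hxs : x ≤ s.re) :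
    ‖riemannZeta s‖ ≤ ‖riemannZeta x‖ := by
  rw [← LSeries_one_eq_riemannZeta (hx.trans_le hxs)]
  exact norm_LSeries_le_norm_riemannZeta (by simp) hx hxs

lemma one_le_norm_riemannZeta_mul {s : ℂ} {x : ℝ} (hx : 1 < x) (hxs : x ≤ s.re) :
    1 ≤ ‖riemannZeta s‖ * ‖riemannZeta x‖ := by
  have inverse := congrArg norm
    (LSeries_one_mul_Lseries_moebius (hx.trans_le hxs))
  rw [LSeries_one_eq_riemannZeta (hx.trans_le hxs), norm_mul, norm_one] at inverse
  rw [← inverse]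
  gcongr
  refine norm_LSeries_le_norm_riemannZeta (fun n ↦ ?_) hx hxs
  rw [norm_intCast]
  exact_mod_cast ArithmeticFunction.abs_moebius_le_one

lemma norm_riemannZeta_le_sq_mul {s s' : ℂ} {x : ℝ} (hx : 1 < x) (hxs : x ≤ s.re)
    (hxs' : x ≤ s'.re) : ‖riemannZeta s‖ ≤ ‖riemannZeta x‖ ^ 2 * ‖riemannZeta s'‖ :=
  calc ‖riemannZeta s‖ ≤ ‖riemannZeta x‖ * 1 := by
        rw [mul_one]
        exact norm_riemannZeta_le hx hxs
    _ ≤ ‖riemannZeta x‖ * (‖riemannZeta s'‖ * ‖riemannZeta x‖) := by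
        gcongr
        exact one_le_norm_riemannZeta_mul hx hxs'
    _ = _ := by ring

lemma norm_riemannZeta_four_le : ‖riemannZeta (4 : ℝ)‖ ≤ 1.0824 := by
  have : riemannZeta (4 : ℝ) = (π ^ 4 / 90 : ℝ) := by
    push_cast
    exact riemannZeta_four
  rw [this, norm_real, Real.norm_of_nonneg (by positivity)]
  calc π ^ 4 / 90 ≤ 3.1416 ^ 4 / 90 := by gcongr; exact Real.pi_lt_d4.le
    _ ≤ 1.0824 := by norm_num

lemma rpow_le_add_of_mem_Icc {x a b r : ℝ} (hx : 0 < x) (hr : r ∈ Icc a b) :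
    x ^ r ≤ x ^ a + x ^ b := by
  rcases le_total 1 x with h | h
  · exact (Real.rpow_le_rpow_of_exponent_le h hr.2).trans (by simp [Real.rpow_nonneg hx.le])
  · exact (Real.rpow_le_rpow_of_exponent_ge hx h hr.1).trans (by simp [Real.rpow_nonneg hx.le])

lemma exists_norm_mellin_le {E : Type*} [NormedAddCommGroup E] [NormedSpace ℂ E] {f : ℝ → E}
    {a b : ℝ} (ha : MellinConvergent f a) (hb : MellinConvergent f b) :
    ∃ C : ℝ, ∀ s : ℂ, s.re ∈ Icc a b → ‖mellin f s‖ ≤ C := by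
  refine ⟨∫ x in Ioi (0 : ℝ),
    (‖(x : ℂ) ^ ((a : ℂ) - 1) • f x‖ + ‖(x : ℂ) ^ ((b : ℂ) - 1) • f x‖), fun s hs ↦ ?_⟩
  refine norm_integral_le_of_norm_le (ha.norm.add hb.norm)
    ((ae_restrict_iff' measurableSet_Ioi).2 (ae_of_all _ fun x (hx : 0 < x) ↦ ?_))
  simp only [norm_smul, ← add_mul, norm_cpow_eq_rpow_re_of_pos hx, sub_re, ofReal_re, one_re]
  gcongr
  exact rpow_le_add_of_mem_Icc hx ⟨by linarith [hs.1], by linarith [hs.2]⟩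

lemma exists_norm_completedRiemannZeta₀_le (b : ℝ) :
    ∃ C : ℝ, 0 ≤ C ∧ ∀ s : ℂ, |s.re| ≤ b → ‖completedRiemannZeta₀ s‖ ≤ C := by
  let P := HurwitzZeta.hurwitzEvenFEPair 0
  have convergent (s : ℂ) : MellinConvergent P.f_modif s :=
    (P.isStrongFEPair_toStrongFEPair.hasMellin s).1
  obtain ⟨C, hC⟩ := exists_norm_mellin_le (convergent (-b / 2 : ℝ)) (convergent (b / 2 : ℝ))
  refine ⟨|C| / 2, by positivity, fun s hs ↦ ?_⟩
  have mellin_le : ‖mellin P.f_modif (s / 2)‖ ≤ C := by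
    have half_re : (s / 2).re = s.re / 2 := by simp
    refine hC _ (half_re ▸ ⟨?_, ?_⟩) <;> linarith [abs_le.1 hs]
  have eq_mellin : completedRiemannZeta₀ s = mellin P.f_modif (s / 2) / 2 := rfl
  rw [eq_mellin, norm_div, norm_ofNat]
  gcongr
  exact mellin_le.trans (le_abs_self C)

/-! ### The function `χ` -/

lemma chi_one_sub (s : ℂ) : chi (1 - s) = chi s := by
  rw [chi, chi, completedRiemannZeta₀_one_sub]
  ring

lemma chi_one : chi 1 = 1 := by simp [chi]

lemma differentiable_chi : Differentiable ℂ chi :=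
  ((differentiable_id.mul (differentiable_id.sub_const 1)).mul
    differentiable_completedZeta₀).add_const 1

lemma chi_eq_mul_riemannZeta {s : ℂ} (hs : 0 < s.re) (hs1 : s ≠ 1) :
    chi s = s * (s - 1) * (Gammaℝ s * riemannZeta s) := by
  have s_ne : s ≠ 0 := ne_zero_of_re_pos hs
  have one_sub_ne : 1 - s ≠ 0 := sub_ne_zero.2 hs1.symm
  rw [riemannZeta_def_of_ne_zero s_ne, mul_div_cancel₀ _ (Gammaℝ_ne_zero_of_re_pos hs),
    completedRiemannZeta_eq, chi]
  field_simp
  ring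

lemma chi_ne_zero {s : ℂ} (hs : 1 ≤ s.re) : chi s ≠ 0 := by
  rcases eq_or_ne s 1 with rfl | hs1
  · simp [chi_one]
  have s_re : 0 < s.re := by linarith
  rw [chi_eq_mul_riemannZeta s_re hs1]
  exact mul_ne_zero (mul_ne_zero (ne_zero_of_re_pos s_re) (sub_ne_zero.2 hs1))
    (mul_ne_zero (Gammaℝ_ne_zero_of_re_pos s_re) (riemannZeta_ne_zero_of_one_le_re hs))

lemma chi_conj (s : ℂ) : chi (conj s) = conj (chi s) := by
  have of_re_pos {z : ℂ} (hz : 0 < z.re) : chi (conj z) = conj (chi z) := by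
    rcases eq_or_ne z 1 with rfl | hz1
    · simp [chi_one]
    have conj_ne : conj z ≠ 1 := fun h ↦ hz1 (by simpa using congrArg conj h)
    rw [chi_eq_mul_riemannZeta hz hz1, chi_eq_mul_riemannZeta (by rwa [conj_re]) conj_ne,
      Gammaℝ_conj, riemannZeta_conj]
    simp only [map_mul, map_sub, map_one]
  rcases lt_or_ge 0 s.re with hs | hs
  · exact of_re_pos hs
  · rw [← chi_one_sub (conj s), ← chi_one_sub s, ← of_re_pos (by rw [sub_re, one_re]; linarith),
      map_sub, map_one]

lemma norm_chi_sub_eq {w : ℂ} {a : ℝ} (hw : w.re = (1 + a) / 2) : ‖chi (w - a)‖ = ‖chi w‖ := by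
  have reflected : 1 - (w - a) = conj w := by
    apply Complex.ext
    · simp only [sub_re, one_re, ofReal_re, conj_re]
      linarith
    · simp
  rw [← chi_one_sub, reflected, chi_conj, norm_conj]

lemma exists_norm_chi_le (b : ℝ) :
    ∃ C : ℝ, 0 ≤ C ∧ ∀ s : ℂ, |s.re| ≤ b → ‖chi s‖ ≤ C * Real.exp (2 * ‖s‖) := by
  obtain ⟨C, hC, zeta_le⟩ := exists_norm_completedRiemannZeta₀_le b
  refine ⟨C + 1, by positivity, fun s hs ↦ ?_⟩
  have norm_le_exp : ‖s‖ + 1 ≤ Real.exp ‖s‖ := Real.add_one_le_exp _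
  have norm_sub_le_exp : ‖s - 1‖ ≤ Real.exp ‖s‖ :=
    (norm_sub_le _ _).trans (by rwa [norm_one])
  calc ‖chi s‖ ≤ ‖s * (s - 1) * completedRiemannZeta₀ s‖ + ‖(1 : ℂ)‖ := norm_add_le _ _
    _ = ‖s‖ * ‖s - 1‖ * ‖completedRiemannZeta₀ s‖ + 1 := by rw [norm_mul, norm_mul, norm_one]
    _ ≤ Real.exp ‖s‖ * Real.exp ‖s‖ * C + Real.exp ‖s‖ * Real.exp ‖s‖ := by
        gcongr
        · linarith
        · exact zeta_le s hs
        · exact one_le_mul_of_one_le_of_one_le (Real.one_le_exp (norm_nonneg _))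
            (Real.one_le_exp (norm_nonneg _))
    _ = (C + 1) * Real.exp (2 * ‖s‖) := by rw [two_mul, Real.exp_add]; ring

lemma exists_norm_inv_chi_le {m : ℝ} (hm : 1 < m) (M : ℝ) :
    ∃ C : ℝ, 0 ≤ C ∧ ∀ s : ℂ, m ≤ s.re → s.re ≤ M → ‖(chi s)⁻¹‖ ≤ C * Real.exp ‖s‖ := by
  obtain ⟨C, hC, inv_Gammaℝ_le⟩ := exists_norm_inv_Gammaℝ_le M
  refine ⟨(m - 1)⁻¹ * C * ‖riemannZeta m‖, by have := sub_pos.2 hm; positivity,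
    fun s hms hsM ↦ ?_⟩
  have hs1 : s ≠ 1 := by rintro rfl; rw [one_re] at hms; linarith
  have one_le_norm : 1 ≤ ‖s‖ := by linarith [re_le_norm s]
  have le_norm_sub : m - 1 ≤ ‖s - 1‖ :=
    (by rw [sub_re, one_re]; linarith : m - 1 ≤ (s - 1).re).trans (re_le_norm _)
  have zeta_pos : 0 < ‖riemannZeta s‖ :=
    norm_pos_iff.2 (riemannZeta_ne_zero_of_one_le_re (by linarith))
  have inv_zeta_le : ‖riemannZeta s‖⁻¹ ≤ ‖riemannZeta m‖ := by
    rw [inv_le_iff_one_le_mul₀' zeta_pos]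
    exact one_le_norm_riemannZeta_mul hm hms
  have inv_Gammaℝ := inv_Gammaℝ_le s (by linarith) hsM
  rw [norm_inv] at inv_Gammaℝ
  rw [chi_eq_mul_riemannZeta (by linarith) hs1, norm_inv, norm_mul, norm_mul, norm_mul, mul_inv,
    mul_inv, mul_inv]
  calc ‖s‖⁻¹ * ‖s - 1‖⁻¹ * (‖Gammaℝ s‖⁻¹ * ‖riemannZeta s‖⁻¹)
      ≤ 1 * (m - 1)⁻¹ * (C * Real.exp |s.im| * ‖riemannZeta m‖) := by
        gcongr
        exact inv_le_one_of_one_le₀ one_le_norm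
    _ ≤ 1 * (m - 1)⁻¹ * (C * Real.exp ‖s‖ * ‖riemannZeta m‖) := by
        have := sub_pos.2 hm
        gcongr
        exact abs_im_le_norm s
    _ = _ := by ring

lemma norm_chi_sub_le_mul_norm_chi {w : ℂ} {a : ℝ} (ha : 0 ≤ a) (hw : a + 4 ≤ w.re) :
    ‖chi (w - a)‖ ≤ π ^ (a / 2) * ‖riemannZeta (4 : ℝ)‖ ^ 2 * ‖chi w‖ := by
  have sub_re_eq : (w - a).re = w.re - a := by simp
  have ne_one {z : ℂ} (hz : 4 ≤ z.re) : z ≠ 1 := by rintro rfl; norm_num at hz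
  rw [chi_eq_mul_riemannZeta (s := w - a) (by linarith) (ne_one (by linarith)),
    chi_eq_mul_riemannZeta (s := w) (by linarith) (ne_one (by linarith))]
  simp only [norm_mul]
  have norm_sub_le : ‖w - a‖ ≤ ‖w‖ := norm_sub_ofReal_le_norm ha (by linarith)
  have norm_sub_one_le : ‖w - a - 1‖ ≤ ‖w - 1‖ := by
    rw [sub_right_comm]
    exact norm_sub_ofReal_le_norm ha (by rw [sub_re, one_re]; linarith)
  have zeta_le : ‖riemannZeta (w - a)‖ ≤ ‖riemannZeta (4 : ℝ)‖ ^ 2 * ‖riemannZeta w‖ :=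
    norm_riemannZeta_le_sq_mul (by norm_num) (by linarith) (by linarith)
  calc ‖w - a‖ * ‖w - a - 1‖ * (‖Gammaℝ (w - a)‖ * ‖riemannZeta (w - a)‖)
      ≤ ‖w‖ * ‖w - 1‖ * (π ^ (a / 2) * ‖Gammaℝ w‖ *
          (‖riemannZeta (4 : ℝ)‖ ^ 2 * ‖riemannZeta w‖)) := by
        gcongr
        exact norm_Gammaℝ_sub_le ha hw
    _ = _ := by ring

lemma exists_norm_chi_sub_div_le {a m : ℝ} (ha : 0 ≤ a) (hm : 1 < m) :
    ∃ C : ℝ, ∀ w : ℂ, m ≤ w.re → ‖chi (w - a) / chi w‖ ≤ C * Real.exp (3 * ‖w‖) := by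
  obtain ⟨C₁, hC₁, chi_le⟩ := exists_norm_chi_le (a + 4)
  obtain ⟨C₂, hC₂, inv_chi_le⟩ := exists_norm_inv_chi_le hm (a + 4)
  set C₃ := π ^ (a / 2) * ‖riemannZeta (4 : ℝ)‖ ^ 2
  refine ⟨C₁ * Real.exp (2 * a) * C₂ + C₃, fun w hw ↦ ?_⟩
  have one_le_exp : 1 ≤ Real.exp (3 * ‖w‖) := Real.one_le_exp (by positivity)
  rcases le_total w.re (a + 4) with hw4 | hw4
  · have norm_sub : ‖w - a‖ ≤ ‖w‖ + a :=
      (norm_sub_le _ _).trans_eq (by rw [norm_real, Real.norm_of_nonneg ha])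
    have re_le : |(w - a).re| ≤ a + 4 := by
      rw [sub_re, ofReal_re, abs_le]
      constructor <;> linarith
    calc ‖chi (w - a) / chi w‖ = ‖chi (w - a)‖ * ‖(chi w)⁻¹‖ := by rw [div_eq_mul_inv, norm_mul]
      _ ≤ C₁ * Real.exp (2 * (‖w‖ + a)) * (C₂ * Real.exp ‖w‖) := by
          gcongr
          · exact (chi_le _ re_le).trans (by gcongr)
          · exact inv_chi_le w hw hw4
      _ = C₁ * Real.exp (2 * a) * C₂ * Real.exp (3 * ‖w‖) := by
          rw [show 3 * ‖w‖ = 2 * ‖w‖ + ‖w‖ by ring, mul_add, Real.exp_add, Real.exp_add]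
          ring
      _ ≤ _ := by gcongr; exact le_add_of_nonneg_right (by positivity)
  · have chi_pos := norm_pos_iff.2 (chi_ne_zero (s := w) (by linarith))
    calc ‖chi (w - a) / chi w‖ ≤ C₃ := by
          rw [norm_div, div_le_iff₀ chi_pos]
          exact norm_chi_sub_le_mul_norm_chi ha hw4
      _ ≤ C₃ * Real.exp (3 * ‖w‖) := le_mul_of_one_le_right (by positivity) one_le_exp
      _ ≤ _ := by gcongr; exact le_add_of_nonneg_left (by positivity)

lemma diffContOnCl_chi_sub_div {m : ℝ} (hm : 1 ≤ m) (a : ℝ) :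
    DiffContOnCl ℂ (fun z ↦ chi (z + m - a) / chi (z + m)) {z | 0 < z.re} := by
  refine DifferentiableOn.diffContOnCl fun z hz ↦ DifferentiableAt.differentiableWithinAt ?_
  rw [closure_setOfPred_lt_re, mem_ofPred] at hz
  exact ((differentiable_chi _).comp z (by fun_prop)).fun_div
    ((differentiable_chi _).comp z (by fun_prop))
    (chi_ne_zero (by rw [add_re, ofReal_re]; linarith))

lemma isBigO_chi_sub_div {a m : ℝ} (ha : 0 ≤ a) (hm : 1 < m) :
    (fun z : ℂ ↦ chi (z + m - a) / chi (z + m)) =O[Bornology.cobounded ℂ ⊓ 𝓟 {z : ℂ | 0 < z.re}]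
      fun z ↦ Real.exp (3 * ‖z‖ ^ (1 : ℝ)) := by
  obtain ⟨C, growth⟩ := exists_norm_chi_sub_div_le ha hm
  refine Asymptotics.IsBigO.of_bound (|C| * Real.exp (3 * m))
    ((eventually_principal.2 fun (z : ℂ) (hz : 0 < z.re) ↦ ?_).filter_mono inf_le_right)
  have norm_shift : ‖z + m‖ ≤ ‖z‖ + m :=
    (norm_add_le _ _).trans_eq (by rw [norm_real, Real.norm_of_nonneg (by linarith)])
  calc _ ≤ C * Real.exp (3 * ‖z + m‖) := growth _ (by rw [add_re, ofReal_re]; linarith)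
    _ ≤ |C| * Real.exp (3 * (‖z‖ + m)) := by gcongr; exact le_abs_self C
    _ = _ := by
        rw [Real.norm_of_nonneg (Real.exp_pos _).le, Real.rpow_one, mul_add, Real.exp_add]
        ring

lemma norm_chi_sub_le_of_one_lt {w : ℂ} {a : ℝ} (ha : 1 < a) (hw : (1 + a) / 2 ≤ w.re) :
    ‖chi (w - a)‖ ≤ ‖chi w‖ := by
  set m : ℝ := (1 + a) / 2 with hm
  have one_lt_m : 1 < m := by linarith
  have shift_re (z : ℂ) : (z + m).re = z.re + m := by simp
  have bounded_on_real :
      IsBoundedUnder (· ≤ ·) atTop fun x : ℝ ↦ ‖chi (x + m - a) / chi (x + m)‖ := by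
    refine isBoundedUnder_of_eventually_le (a := π ^ (a / 2) * ‖riemannZeta (4 : ℝ)‖ ^ 2)
      ((eventually_ge_atTop (a + 4)).mono fun x hx ↦ ?_)
    have hx_re : a + 4 ≤ ((x : ℂ) + m).re := by rw [shift_re, ofReal_re]; linarith
    rw [norm_div, div_le_iff₀ (norm_pos_iff.2 (chi_ne_zero (by linarith)))]
    exact norm_chi_sub_le_mul_norm_chi (by linarith) hx_re
  have on_imaginary_axis (x : ℝ) : ‖chi (x * I + m - a) / chi (x * I + m)‖ ≤ 1 := by
    rw [norm_div, norm_chi_sub_eq (by rw [shift_re]; simp [hm])]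
    exact div_self_le_one _
  have quotient_le := PhragmenLindelof.right_half_plane_of_bounded_on_real
    (diffContOnCl_chi_sub_div one_lt_m.le a)
    ⟨1, by norm_num, 3, isBigO_chi_sub_div (by linarith) one_lt_m⟩ bounded_on_real on_imaginary_axis
    (z := w - m) (by rw [sub_re, ofReal_re]; linarith)
  rwa [sub_add_cancel, norm_div, div_le_one (norm_pos_iff.2 (chi_ne_zero (by linarith)))]
    at quotient_le

lemma norm_chi_sub_le_norm_chi {w : ℂ} {a : ℝ} (ha : 1 ≤ a) (hw : (1 + a) / 2 ≤ w.re) :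
    ‖chi (w - a)‖ ≤ ‖chi w‖ := by
  rcases hw.eq_or_lt with hw | hw
  · exact (norm_chi_sub_eq hw.symm).le
  have continuous_shift : Continuous fun b : ℝ ↦ ‖chi (w - b)‖ :=
    (differentiable_chi.continuous.comp (by fun_prop)).norm
  refine le_of_tendsto (continuous_shift.continuousWithinAt (s := Ioi a)).tendsto ?_
  filter_upwards [Ioo_mem_nhdsGT (show a < 2 * w.re - 1 by linarith)] with b hb
  exact norm_chi_sub_le_of_one_lt (ha.trans_lt hb.1) (by linarith [hb.2])

lemma norm_chi_sub_one_sq_mul_le {w : ℂ} (hw : 5 ≤ w.re) :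
    ‖chi (w - 1)‖ ^ 2 * ‖w - 1‖ ≤ 10 * ‖chi w‖ ^ 2 := by
  have sub_re_eq : (w - 1).re = w.re - 1 := by simp
  have ne_one {z : ℂ} (hz : 4 ≤ z.re) : z ≠ 1 := by rintro rfl; norm_num at hz
  have exp_le : Real.exp (1 / (2 * (w.re - 1))) ≤ 8 / 7 := by
    have le_eighth : 1 / (2 * (w.re - 1)) ≤ 1 / 8 := by gcongr; linarith
    have := Real.one_sub_le_exp_neg (1 / 8)
    rw [Real.exp_neg] at this
    calc Real.exp (1 / (2 * (w.re - 1))) ≤ Real.exp (1 / 8) := by gcongr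
      _ ≤ 8 / 7 := by rw [← inv_le_inv₀ (by norm_num) (by positivity)]; linarith
  have Gammaℝ_le : ‖Gammaℝ (w - 1)‖ ^ 2 * ‖w - 1‖ ≤ 2 * π * (8 / 7) * ‖Gammaℝ w‖ ^ 2 :=
    (norm_Gammaℝ_sub_one_sq_le (by linarith)).trans (by gcongr)
  have norm_sub_le {z : ℂ} (hz : 1 ≤ z.re) : ‖z - 1‖ ≤ ‖z‖ := by
    simpa using norm_sub_ofReal_le_norm (w := z) (a := 1) zero_le_one (by linarith)
  have zeta_le : ‖riemannZeta (w - 1)‖ ≤ 1.0824 ^ 2 * ‖riemannZeta w‖ :=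
    (norm_riemannZeta_le_sq_mul (s' := w) (x := 4) (by norm_num) (by linarith)
      (by linarith)).trans (by gcongr; exact norm_riemannZeta_four_le)
  rw [chi_eq_mul_riemannZeta (s := w - 1) (by linarith) (ne_one (by linarith)),
    chi_eq_mul_riemannZeta (s := w) (by linarith) (ne_one (by linarith))]
  simp only [norm_mul]
  calc _ = (‖w - 1‖ * ‖w - 1 - 1‖) ^ 2 * (‖Gammaℝ (w - 1)‖ ^ 2 * ‖w - 1‖) *
          ‖riemannZeta (w - 1)‖ ^ 2 := by ring
    _ ≤ (‖w‖ * ‖w - 1‖) ^ 2 * (2 * π * (8 / 7) * ‖Gammaℝ w‖ ^ 2) *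
          (1.0824 ^ 2 * ‖riemannZeta w‖) ^ 2 := by
        gcongr
        · exact norm_sub_le (by linarith)
        · exact norm_sub_le (by linarith)
    _ = 2 * π * (8 / 7) * 1.0824 ^ 4 *
          (‖w‖ * ‖w - 1‖ * (‖Gammaℝ w‖ * ‖riemannZeta w‖)) ^ 2 := by ring
    _ ≤ 10 * (‖w‖ * ‖w - 1‖ * (‖Gammaℝ w‖ * ‖riemannZeta w‖)) ^ 2 := by
        gcongr
        linarith [Real.pi_lt_d4]

lemma norm_chi_sub_one_le_mul_norm_chi {w : ℂ} {r c : ℝ} (hw : 5 ≤ w.re) (hr : r ≤ ‖w - 1‖)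
    (hc : 0 ≤ c) (hcr : 10 ≤ c ^ 2 * r) : ‖chi (w - 1)‖ ≤ c * ‖chi w‖ := by
  have r_pos : 0 < r := pos_of_mul_pos_right (by linarith) (sq_nonneg c)
  refine le_of_sq_le_sq ?_ (by positivity)
  refine le_of_mul_le_mul_right ?_ r_pos
  calc ‖chi (w - 1)‖ ^ 2 * r ≤ ‖chi (w - 1)‖ ^ 2 * ‖w - 1‖ := by gcongr
    _ ≤ 10 * ‖chi w‖ ^ 2 := norm_chi_sub_one_sq_mul_le hw
    _ ≤ c ^ 2 * r * ‖chi w‖ ^ 2 := by gcongr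
    _ = (c * ‖chi w‖) ^ 2 * r := by ring

lemma norm_chi_sub_one_le {w : ℂ} (hw : 1 ≤ w.re) : ‖chi (w - 1)‖ ≤ ‖chi w‖ := by
  simpa using norm_chi_sub_le_norm_chi (w := w) (a := 1) le_rfl (by linarith)

lemma norm_chi_sub_two_le {w : ℂ} (hw : 3 / 2 ≤ w.re) : ‖chi (w - 2)‖ ≤ ‖chi w‖ := by
  simpa using norm_chi_sub_le_norm_chi (w := w) (a := 2) (by norm_num) (by linarith)

/-! ### The function `f₁` -/

lemma norm_sub_one_mul_le_norm_three_mul_sub_two {s : ℂ} (hs : 1 / 2 ≤ s.re) (ht : 17 ≤ |s.im|) :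
    2.97 * ‖s - 1‖ ≤ ‖3 * s - 2‖ := by
  have im_sq := sq_le_sq_of_le_abs (by norm_num) ht
  have : ‖s - 1‖ ≤ 2.97⁻¹ * ‖3 * s - 2‖ := by
    refine norm_le_mul_norm_of_sq_le (by norm_num) ?_
    simp only [sub_re, sub_im, mul_re, mul_im, one_re, one_im, re_ofNat, im_ofNat]
    nlinarith
  rwa [← div_eq_inv_mul, le_div_iff₀' (by norm_num)] at this

lemma norm_sub_two_le {s : ℂ} (hs : 1 / 2 ≤ s.re) (ht : 17 ≤ |s.im|) :
    ‖s - 2‖ ≤ 1.01 * ‖s - 1‖ := by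
  have im_sq := sq_le_sq_of_le_abs (by norm_num) ht
  refine norm_le_mul_norm_of_sq_le (by norm_num) ?_
  simp only [sub_re, sub_im, one_re, one_im, re_ofNat, im_ofNat]
  nlinarith

lemma norm_add_one_le {s : ℂ} (ht : 17 ≤ |s.im|) : ‖s + 1‖ ≤ 1.07 * ‖s - 1‖ := by
  have im_sq := sq_le_sq_of_le_abs (by norm_num) ht
  refine norm_le_mul_norm_of_sq_le (by norm_num) ?_
  simp only [sub_re, sub_im, add_re, add_im, one_re, one_im]
  nlinarith [sq_nonneg (s.re - 15)]

lemma norm_le_mul_norm_sub_one {s : ℂ} (ht : 17 ≤ |s.im|) : ‖s‖ ≤ 1.04 * ‖s - 1‖ := by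
  have im_sq := sq_le_sq_of_le_abs (by norm_num) ht
  refine norm_le_mul_norm_of_sq_le (by norm_num) ?_
  simp only [sub_re, sub_im, one_re, one_im]
  nlinarith [sq_nonneg (s.re - 15)]

lemma norm_three_mul_sub_one_le {s : ℂ} (ht : 17 ≤ |s.im|) : ‖3 * s - 1‖ ≤ 3.1 * ‖s - 1‖ := by
  have im_sq := sq_le_sq_of_le_abs (by norm_num) ht
  refine norm_le_mul_norm_of_sq_le (by norm_num) ?_
  simp only [sub_re, sub_im, mul_re, mul_im, one_re, one_im, re_ofNat, im_ofNat]
  nlinarith [sq_nonneg (s.re - 11)]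

lemma A_eq_ofReal : A = (π / 3 - 1 : ℝ) := by
  rw [A]
  push_cast
  rfl

lemma re_A_mul_sub_add_one (s : ℂ) : (A * s - A + 1).re = 1 + (π / 3 - 1) * (s.re - 1) := by
  rw [A_eq_ofReal, add_re, sub_re, re_ofReal_mul, ofReal_re, one_re]
  ring

lemma im_A_mul_sub_add_one (s : ℂ) : (A * s - A + 1).im = (π / 3 - 1) * s.im := by
  rw [A_eq_ofReal, add_im, sub_im, im_ofReal_mul, ofReal_im, one_im]
  ring

lemma norm_one_sub_A_mul_le {s : ℂ} (hs : 1 / 2 ≤ s.re) : ‖1 - A * s‖ ≤ ‖A * s - A + 1‖ := by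
  rw [← one_mul ‖A * s - A + 1‖]
  refine norm_le_mul_norm_of_sq_le zero_le_one ?_
  rw [re_A_mul_sub_add_one, im_A_mul_sub_add_one, A_eq_ofReal, sub_re, sub_im, re_ofReal_mul,
    im_ofReal_mul, one_re, one_im]
  have : 0 ≤ (π / 3 - 1) * (2 * s.re - 1) * (2 - (π / 3 - 1)) := by
    refine mul_nonneg (mul_nonneg ?_ (by linarith)) ?_ <;>
      linarith [Real.pi_gt_three, Real.pi_le_four]
  nlinarith

lemma le_norm_A_mul_sub_add_one {s : ℂ} {x : ℝ} (hx : 0 ≤ x)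
    (hre : x ≤ 1 + (π / 3 - 1) * (s.re - 1)) (ht : 17 ≤ |s.im|) {ν : ℝ}
    (hν : ν ^ 2 ≤ x ^ 2 + (0.0471 * 17) ^ 2) : ν ≤ ‖A * s - A + 1‖ := by
  refine le_norm_of_sq_le (hν.trans ?_)
  rw [re_A_mul_sub_add_one, im_A_mul_sub_add_one, mul_pow, mul_pow]
  have im_sq := sq_le_sq_of_le_abs (by norm_num) ht
  have A_lower : 0.0471 ≤ π / 3 - 1 := by linarith [Real.pi_gt_d4]
  gcongr

lemma norm_A_mul_sub_add_one_ge {s : ℂ} (hs : 1 / 2 ≤ s.re) (ht : 17 ≤ |s.im|) :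
    1.25 ≤ ‖A * s - A + 1‖ :=
  le_norm_A_mul_sub_add_one (x := 0.9764) (by norm_num)
    (by nlinarith [Real.pi_gt_d4, Real.pi_lt_d4]) ht (by norm_num)

lemma norm_A_mul_sub_add_one_ge_of_four_le {s : ℂ} (hs : 4 ≤ s.re) (ht : 17 ≤ |s.im|) :
    1.35 ≤ ‖A * s - A + 1‖ :=
  le_norm_A_mul_sub_add_one (x := 1.141) (by norm_num) (by nlinarith [Real.pi_gt_d4]) ht
    (by norm_num)

/-- The size, up to a constant factor, of the dominant term of `f1 s` for large `|Im s|`. Both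
`f1 s` and `f1 (1 - s)` are measured against it. -/
noncomputable def f1Scale (s : ℂ) : ℝ :=
  ‖s - 1‖ ^ 3 * ‖A * s - A + 1‖ * ‖chi (s + 1)‖ * ‖chi (3 * s)‖

lemma f1Scale_pos {s : ℂ} (hs : 1 / 2 ≤ s.re) (ht : 17 ≤ |s.im|) : 0 < f1Scale s := by
  have sub_one_ne : s - 1 ≠ 0 := by
    intro h
    rw [sub_eq_zero.1 h, one_im, abs_zero] at ht
    linarith
  have linear_pos : 0 < ‖A * s - A + 1‖ := by linarith [norm_A_mul_sub_add_one_ge hs ht]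
  have chi_add_pos : 0 < ‖chi (s + 1)‖ :=
    norm_pos_iff.2 (chi_ne_zero (by rw [add_re, one_re]; linarith))
  have chi_three_pos : 0 < ‖chi (3 * s)‖ :=
    norm_pos_iff.2 (chi_ne_zero (by rw [re_ofNat_mul]; linarith))
  have := norm_pos_iff.2 sub_one_ne
  rw [f1Scale]
  positivity

lemma mul_le_div_mul_f1Scale {s : ℂ} {c ν : ℝ} (hc : 0 ≤ c) (hν : 0 < ν)
    (hνs : ν ≤ ‖A * s - A + 1‖) :
    c * (‖s - 1‖ ^ 3 * ‖chi (s + 1)‖ * ‖chi (3 * s)‖) ≤ c / ν * f1Scale s := by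
  rw [div_mul_eq_mul_div, le_div_iff₀ hν, f1Scale]
  calc c * (‖s - 1‖ ^ 3 * ‖chi (s + 1)‖ * ‖chi (3 * s)‖) * ν
      ≤ c * (‖s - 1‖ ^ 3 * ‖chi (s + 1)‖ * ‖chi (3 * s)‖) * ‖A * s - A + 1‖ := by gcongr
    _ = _ := by ring

lemma mul_f1Scale_le_norm_f1 {s : ℂ} {α β ν : ℝ} (hs : 1 / 2 ≤ s.re) (ht : 17 ≤ |s.im|)
    (hα : 0 ≤ α) (hβ : 0 ≤ β) (hν : 0 < ν) (chi_s : ‖chi s‖ ≤ α * ‖chi (s + 1)‖)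
    (chi_three_sub_one : ‖chi (3 * s - 1)‖ ≤ β * ‖chi (3 * s)‖) (hνs : ν ≤ ‖A * s - A + 1‖) :
    (2.97 - (1.07 * 1.01 * α * β + 2 * 1.01 * α) / ν) * f1Scale s ≤ ‖f1 s‖ := by
  set X := ‖chi (s + 1)‖
  set Y := ‖chi (3 * s)‖
  have norm_sub_two := norm_sub_two_le hs ht
  have triangle : ‖s - 1‖ * (‖s - 1‖ * ‖3 * s - 2‖ * ‖A * s - A + 1‖ * X * Y
      - ‖s + 1‖ * ‖s - 2‖ * ‖chi s‖ * ‖chi (3 * s - 1)‖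
      - 2 * ‖s - 1‖ * ‖s - 2‖ * ‖chi s‖ * Y) ≤ ‖f1 s‖ := by
    rw [f1, norm_mul]
    gcongr
    refine le_trans ?_ ((sub_le_sub_right (norm_sub_norm_le _ _) _).trans (norm_sub_norm_le _ _))
    simp only [norm_mul, norm_ofNat, X, Y, le_refl]
  have dominant : 2.97 * f1Scale s ≤
      ‖s - 1‖ * (‖s - 1‖ * ‖3 * s - 2‖ * ‖A * s - A + 1‖ * X * Y) := by
    calc _ = ‖s - 1‖ * (‖s - 1‖ * (2.97 * ‖s - 1‖) * ‖A * s - A + 1‖ * X * Y) := by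
          rw [f1Scale]; ring
      _ ≤ _ := by gcongr; exact norm_sub_one_mul_le_norm_three_mul_sub_two hs ht
  have remainder : ‖s - 1‖ * (‖s + 1‖ * ‖s - 2‖ * ‖chi s‖ * ‖chi (3 * s - 1)‖
      + 2 * ‖s - 1‖ * ‖s - 2‖ * ‖chi s‖ * Y) ≤
      (1.07 * 1.01 * α * β + 2 * 1.01 * α) * (‖s - 1‖ ^ 3 * X * Y) := by
    calc _ ≤ ‖s - 1‖ * ((1.07 * ‖s - 1‖) * (1.01 * ‖s - 1‖) * (α * X) * (β * Y)
          + 2 * ‖s - 1‖ * (1.01 * ‖s - 1‖) * (α * X) * Y) := by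
          gcongr; exact norm_add_one_le ht
      _ = _ := by ring
  linarith [mul_le_div_mul_f1Scale (c := 1.07 * 1.01 * α * β + 2 * 1.01 * α) (by positivity) hν hνs]

lemma f1_one_sub (s : ℂ) :
    f1 (1 - s) = s * (-(s * (3 * s - 1) * (1 - A * s) * chi (s - 1) * chi (3 * s - 2))
      + (s + 1) * (s - 2) * chi s * chi (3 * s - 1)
      + 2 * s * (s + 1) * chi s * chi (3 * s - 2)) := by
  rw [f1, ← chi_one_sub (s - 1), ← chi_one_sub (3 * s - 2), ← chi_one_sub (3 * s - 1),
    chi_one_sub s, show 1 - s + 1 = 1 - (s - 1) by ring, show 3 * (1 - s) = 1 - (3 * s - 2) by ring,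
    show 1 - (3 * s - 2) - 1 = 1 - (3 * s - 1) by ring]
  ring

lemma norm_f1_one_sub_le_mul_f1Scale {s : ℂ} {α β γ ν : ℝ} (hs : 1 / 2 ≤ s.re)
    (ht : 17 ≤ |s.im|) (hα : 0 ≤ α) (hβ : 0 ≤ β) (hγ : 0 ≤ γ) (hν : 0 < ν)
    (chi_s : ‖chi s‖ ≤ α * ‖chi (s + 1)‖) (chi_sub_one : ‖chi (s - 1)‖ ≤ α * ‖chi (s + 1)‖)
    (chi_three_sub_one : ‖chi (3 * s - 1)‖ ≤ β * ‖chi (3 * s)‖)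
    (chi_three_sub_two : ‖chi (3 * s - 2)‖ ≤ γ * ‖chi (3 * s)‖) (hνs : ν ≤ ‖A * s - A + 1‖) :
    ‖f1 (1 - s)‖ ≤ 1.04 * (1.04 * 3.1 * α * γ +
      (1.07 * 1.01 * α * β + 2 * 1.04 * 1.07 * α * γ) / ν) * f1Scale s := by
  set X := ‖chi (s + 1)‖
  set Y := ‖chi (3 * s)‖
  have norm_s := norm_le_mul_norm_sub_one ht
  have norm_sub_two := norm_sub_two_le hs ht
  have norm_add_one := norm_add_one_le ht
  have norm_three := norm_three_mul_sub_one_le ht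
  have norm_linear := norm_one_sub_A_mul_le hs
  have triangle : ‖f1 (1 - s)‖ ≤
      ‖s‖ * (‖s‖ * ‖3 * s - 1‖ * ‖1 - A * s‖ * ‖chi (s - 1)‖ * ‖chi (3 * s - 2)‖
        + ‖s + 1‖ * ‖s - 2‖ * ‖chi s‖ * ‖chi (3 * s - 1)‖
        + 2 * ‖s‖ * ‖s + 1‖ * ‖chi s‖ * ‖chi (3 * s - 2)‖) := by
    rw [f1_one_sub, norm_mul]
    gcongr
    refine norm_add₃_le.trans_eq ?_
    simp only [norm_neg, norm_mul, norm_ofNat]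
  have lower_order := mul_le_div_mul_f1Scale
    (c := 1.07 * 1.01 * α * β + 2 * 1.04 * 1.07 * α * γ) (by positivity) hν hνs
  calc _ ≤ _ := triangle
    _ ≤ (1.04 * ‖s - 1‖) * ((1.04 * ‖s - 1‖) * (3.1 * ‖s - 1‖) * ‖A * s - A + 1‖ * (α * X) *
            (γ * Y)
          + (1.07 * ‖s - 1‖) * (1.01 * ‖s - 1‖) * (α * X) * (β * Y)
          + 2 * (1.04 * ‖s - 1‖) * (1.07 * ‖s - 1‖) * (α * X) * (γ * Y)) := by gcongr
    _ = 1.04 * (1.04 * 3.1 * α * γ * f1Scale s +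
          (1.07 * 1.01 * α * β + 2 * 1.04 * 1.07 * α * γ) * (‖s - 1‖ ^ 3 * X * Y)) := by
        rw [f1Scale]; ring
    _ ≤ 1.04 * (1.04 * 3.1 * α * γ * f1Scale s +
          (1.07 * 1.01 * α * β + 2 * 1.04 * 1.07 * α * γ) / ν * f1Scale s) := by gcongr
    _ = _ := by ring

lemma norm_f1_bounds_of_half_le {s : ℂ} (hs : 1 / 2 ≤ s.re) (ht : 17 ≤ |s.im|) :
    0.48 * f1Scale s ≤ ‖f1 s‖ ∧ ‖f1 (1 - s)‖ ≤ 6.2 * f1Scale s := by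
  have scale_pos := f1Scale_pos hs ht
  have linear := norm_A_mul_sub_add_one_ge hs ht
  have chi_s : ‖chi s‖ ≤ 1 * ‖chi (s + 1)‖ := by
    simpa using norm_chi_sub_one_le (w := s + 1) (by rw [add_re, one_re]; linarith)
  have chi_sub_one : ‖chi (s - 1)‖ ≤ 1 * ‖chi (s + 1)‖ := by
    rw [one_mul, show s - 1 = s + 1 - 2 by ring]
    exact norm_chi_sub_two_le (by rw [add_re, one_re]; linarith)
  have chi_three_sub_one : ‖chi (3 * s - 1)‖ ≤ 1 * ‖chi (3 * s)‖ := by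
    rw [one_mul]
    exact norm_chi_sub_one_le (by rw [re_ofNat_mul]; linarith)
  have chi_three_sub_two : ‖chi (3 * s - 2)‖ ≤ 1 * ‖chi (3 * s)‖ := by
    rw [one_mul]
    exact norm_chi_sub_two_le (by rw [re_ofNat_mul]; linarith)
  constructor
  · refine le_trans ?_ (mul_f1Scale_le_norm_f1 hs ht zero_le_one zero_le_one (by norm_num) chi_s
      chi_three_sub_one linear)
    gcongr
    norm_num
  · refine (norm_f1_one_sub_le_mul_f1Scale hs ht zero_le_one zero_le_one zero_le_one (by norm_num)
      chi_s chi_sub_one chi_three_sub_one chi_three_sub_two linear).trans ?_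
    gcongr
    norm_num

lemma norm_chi_le_of_four_le {s : ℂ} (hs : 4 ≤ s.re) (ht : 17 ≤ |s.im|) :
    ‖chi s‖ ≤ 0.77 * ‖chi (s + 1)‖ := by
  have norm_ge : 17 ≤ ‖s + 1 - 1‖ := by
    rw [add_sub_cancel_right]
    exact ht.trans (abs_im_le_norm s)
  simpa using norm_chi_sub_one_le_mul_norm_chi (w := s + 1) (c := 0.77)
    (by rw [add_re, one_re]; linarith) norm_ge (by norm_num) (by norm_num)

lemma norm_chi_two_mul_sub_one_le {s : ℂ} (hs : 4 ≤ s.re) (ht : 17 ≤ |s.im|) :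
    ‖chi (2 * s - 1)‖ ≤ 0.6 * ‖chi (2 * s)‖ := by
  have norm_ge := mul_abs_im_le_norm_mul_sub 2 s 1
  push_cast at norm_ge
  exact norm_chi_sub_one_le_mul_norm_chi (r := 34) (by rw [re_ofNat_mul]; linarith)
    (by linarith) (by norm_num) (by norm_num)

lemma norm_chi_three_mul_sub_one_le {s : ℂ} (hs : 4 ≤ s.re) (ht : 17 ≤ |s.im|) :
    ‖chi (3 * s - 1)‖ ≤ 0.45 * ‖chi (3 * s)‖ := by
  have norm_ge := mul_abs_im_le_norm_mul_sub 3 s 1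
  push_cast at norm_ge
  exact norm_chi_sub_one_le_mul_norm_chi (r := 51) (by rw [re_ofNat_mul]; linarith)
    (by linarith) (by norm_num) (by norm_num)

lemma norm_chi_three_mul_sub_two_le {s : ℂ} (hs : 4 ≤ s.re) (ht : 17 ≤ |s.im|) :
    ‖chi (3 * s - 2)‖ ≤ 0.21 * ‖chi (3 * s)‖ := by
  have norm_ge := mul_abs_im_le_norm_mul_sub 3 s 2
  have sub_two : 3 * s - 2 = 3 * s - 1 - 1 := by ring
  push_cast [sub_two] at norm_ge
  rw [sub_two]
  calc ‖chi (3 * s - 1 - 1)‖ ≤ 0.45 * ‖chi (3 * s - 1)‖ :=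
        norm_chi_sub_one_le_mul_norm_chi (r := 51)
          (by rw [sub_re, re_ofNat_mul, one_re]; linarith) (by linarith) (by norm_num)
          (by norm_num)
    _ ≤ 0.21 * ‖chi (3 * s)‖ := by
        linarith [norm_chi_three_mul_sub_one_le hs ht, norm_nonneg (chi (3 * s))]

lemma norm_f1_bounds_of_four_le {s : ℂ} (hs : 4 ≤ s.re) (ht : 17 ≤ |s.im|) :
    1.5 * f1Scale s ≤ ‖f1 s‖ ∧ ‖f1 (1 - s)‖ ≤ 1.2 * f1Scale s := by
  have half_le : 1 / 2 ≤ s.re := by linarith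
  have scale_pos := f1Scale_pos half_le ht
  have linear := norm_A_mul_sub_add_one_ge_of_four_le hs ht
  have chi_s := norm_chi_le_of_four_le hs ht
  have chi_sub_one : ‖chi (s - 1)‖ ≤ 0.77 * ‖chi (s + 1)‖ :=
    (norm_chi_sub_one_le (by linarith)).trans chi_s
  have chi_three_sub_one := norm_chi_three_mul_sub_one_le hs ht
  constructor
  · refine le_trans ?_ (mul_f1Scale_le_norm_f1 half_le ht (by norm_num) (by norm_num)
      (by norm_num) chi_s chi_three_sub_one linear)
    gcongr
    norm_num
  · refine (norm_f1_one_sub_le_mul_f1Scale half_le ht (by norm_num) (by norm_num) (by norm_num)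
      (by norm_num) chi_s chi_sub_one chi_three_sub_one (norm_chi_three_mul_sub_two_le hs ht)
      linear).trans ?_
    gcongr
    norm_num

lemma differentiable_f1 : Differentiable ℂ f1 := by
  have chi_comp {g : ℂ → ℂ} (hg : Differentiable ℂ g) : Differentiable ℂ fun s ↦ chi (g s) :=
    differentiable_chi.comp hg
  have := chi_comp (g := fun s ↦ s + 1) (by fun_prop)
  have := chi_comp (g := fun s ↦ 3 * s) (by fun_prop)
  have := chi_comp (g := fun s ↦ 3 * s - 1) (by fun_prop)
  have := differentiable_chi
  unfold f1
  fun_prop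

lemma f1_conj (s : ℂ) : f1 (conj s) = conj (f1 s) := by
  simp only [f1, A_eq_ofReal, map_mul, map_sub, map_add, map_one, map_ofNat, conj_ofReal,
    ← chi_conj]

/-! ### The function `Z₁` -/

/-- The quotient of the two terms of `Z1 s`, whose modulus is to be kept below `1`. Its denominator
does not vanish for `1 / 2 ≤ Re s`, `17 ≤ |Im s|`. -/
noncomputable def Z1Ratio (s : ℂ) : ℂ := chi (2 * s - 1) * f1 (1 - s) / (chi (2 * s) * f1 s)

section Z1Ratio

variable {s : ℂ}

lemma chi_two_mul_ne_zero (hs : 1 / 2 ≤ s.re) : chi (2 * s) ≠ 0 :=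
  chi_ne_zero (by rw [re_ofNat_mul]; linarith)

lemma f1_ne_zero (hs : 1 / 2 ≤ s.re) (ht : 17 ≤ |s.im|) : f1 s ≠ 0 :=
  norm_pos_iff.1 (by linarith [f1Scale_pos hs ht, (norm_f1_bounds_of_half_le hs ht).1])

lemma differentiableAt_Z1Ratio (hs : 1 / 2 ≤ s.re) (ht : 17 ≤ |s.im|) :
    DifferentiableAt ℂ Z1Ratio s :=
  (((differentiable_chi _).comp s (by fun_prop)).mul
    ((differentiable_f1 _).comp s (by fun_prop))).fun_div
    (((differentiable_chi _).comp s (by fun_prop)).mul (differentiable_f1 s))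
    (mul_ne_zero (chi_two_mul_ne_zero hs) (f1_ne_zero hs ht))

lemma norm_Z1Ratio_le_one_of_re_eq_half (hs : s.re = 1 / 2) : ‖Z1Ratio s‖ ≤ 1 := by
  have one_sub : 1 - s = conj s := by
    apply Complex.ext
    · rw [sub_re, one_re, conj_re]
      linarith
    · simp
  have norm_chi : ‖chi (2 * s - 1)‖ = ‖chi (2 * s)‖ := by
    simpa using norm_chi_sub_eq (w := 2 * s) (a := 1) (by rw [re_ofNat_mul]; linarith)
  rw [Z1Ratio, norm_div, norm_mul, norm_mul, norm_chi, one_sub, f1_conj, norm_conj]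
  exact div_self_le_one _

lemma norm_Z1Ratio_le {p q ρ c : ℝ} (hs : 1 / 2 ≤ s.re) (ht : 17 ≤ |s.im|) (hp : 0 < p)
    (hρ : 0 ≤ ρ) (hq : 0 ≤ q) (hc : ρ * q ≤ c * p)
    (chi_le : ‖chi (2 * s - 1)‖ ≤ ρ * ‖chi (2 * s)‖) (f1_ge : p * f1Scale s ≤ ‖f1 s‖)
    (f1_one_sub_le : ‖f1 (1 - s)‖ ≤ q * f1Scale s) : ‖Z1Ratio s‖ ≤ c := by
  have scale_pos := f1Scale_pos hs ht
  have chi_pos := norm_pos_iff.2 (chi_two_mul_ne_zero hs)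
  have f1_pos := norm_pos_iff.2 (f1_ne_zero hs ht)
  have hc_nonneg : 0 ≤ c := by
    by_contra! hc_neg
    linarith [mul_nonneg hρ hq, mul_neg_of_neg_of_pos hc_neg hp]
  rw [Z1Ratio, norm_div, norm_mul, norm_mul, div_le_iff₀ (by positivity)]
  calc ‖chi (2 * s - 1)‖ * ‖f1 (1 - s)‖
      ≤ (ρ * ‖chi (2 * s)‖) * (q * f1Scale s) := by gcongr
    _ = ρ * q * (‖chi (2 * s)‖ * f1Scale s) := by ring
    _ ≤ c * p * (‖chi (2 * s)‖ * f1Scale s) := by gcongr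
    _ = c * (‖chi (2 * s)‖ * (p * f1Scale s)) := by ring
    _ ≤ c * (‖chi (2 * s)‖ * ‖f1 s‖) := by gcongr

lemma norm_Z1Ratio_le_sixteen (hs : 1 / 2 ≤ s.re) (ht : 17 ≤ |s.im|) : ‖Z1Ratio s‖ ≤ 16 := by
  obtain ⟨f1_ge, f1_one_sub_le⟩ := norm_f1_bounds_of_half_le hs ht
  have chi_le : ‖chi (2 * s - 1)‖ ≤ 1 * ‖chi (2 * s)‖ := by
    rw [one_mul]
    exact norm_chi_sub_one_le (by rw [re_ofNat_mul]; linarith)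
  exact norm_Z1Ratio_le hs ht (by norm_num) zero_le_one (by norm_num) (by norm_num) chi_le f1_ge
    f1_one_sub_le

lemma norm_Z1Ratio_le_half (hs : 4 ≤ s.re) (ht : 17 ≤ |s.im|) : ‖Z1Ratio s‖ ≤ 1 / 2 := by
  obtain ⟨f1_ge, f1_one_sub_le⟩ := norm_f1_bounds_of_four_le hs ht
  exact norm_Z1Ratio_le (by linarith) ht (by norm_num) (by norm_num) (by norm_num) (by norm_num)
    (norm_chi_two_mul_sub_one_le hs ht) f1_ge f1_one_sub_le

end Z1Ratio

lemma norm_Z1Ratio_lt_one {s : ℂ} (hs : 1 / 2 < s.re) (ht : 25 ≤ |s.im|) : ‖Z1Ratio s‖ < 1 := by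
  rcases le_total 4 s.re with hs4 | hs4
  · linarith [norm_Z1Ratio_le_half hs4 (by linarith)]
  have im_ge {z : ℂ} (hz : z.im ∈ Icc (s.im - 8) (s.im + 8)) : 17 ≤ |z.im| := by
    have := abs_sub_abs_le_abs_sub s.im z.im
    have : |s.im - z.im| ≤ 8 := abs_le.2 ⟨by linarith [hz.2], by linarith [hz.1]⟩
    linarith
  set η : ℝ := Real.log 2 / (7 / 2) ^ 2
  have η_mul : η * (7 / 2) ^ 2 = Real.log 2 := div_mul_cancel₀ _ (by norm_num)
  have η_pos : 0 < η := by have := Real.log_pos one_lt_two; positivity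
  have exp_right : Real.exp (-(η * (7 / 2) ^ 2)) = 1 / 2 := by
    rw [η_mul, Real.exp_neg, Real.exp_log two_pos, one_div]
  have exp_horizontal : 16 ≤ Real.exp (η * (8 ^ 2 - (7 / 2) ^ 2)) := by
    calc (16 : ℝ) = Real.exp (4 * Real.log 2) := by
          rw [mul_comm, Real.exp_mul, Real.exp_log two_pos]; norm_num
      _ ≤ _ := by rw [Real.exp_le_exp]; linarith
  have mem_horizontal {y : ℝ} (hy : y ∈ ({s.im - 8, s.im + 8} : Set ℝ)) :
      y ∈ Icc (s.im - 8) (s.im + 8) := by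
    rcases hy with rfl | rfl <;> constructor <;> linarith
  refine (norm_le_exp_of_rect (m := 1 / 2) (d := 7 / 2) (T := 8) (by norm_num) (by norm_num)
    η_pos.le (fun z hz ↦ (differentiableAt_Z1Ratio hz.1.1 (im_ge hz.2)).differentiableWithinAt)
    (fun z hz ↦ norm_Z1Ratio_le_one_of_re_eq_half hz.1) (fun z hz ↦ ?_)
    (fun z hz ↦ (norm_Z1Ratio_le_sixteen hz.1.1 (im_ge (mem_horizontal hz.2))).trans
      exp_horizontal) ⟨hs.le, by linarith⟩ rfl).trans_lt ?_
  · rw [exp_right]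
    refine norm_Z1Ratio_le_half ?_ (im_ge hz.2)
    rw [show z.re = _ from hz.1]
    norm_num
  · have := sub_pos.2 hs
    rw [Real.exp_lt_one_iff, neg_lt_zero]
    positivity

lemma Z1_ne_zero_of_half_lt {s : ℂ} (hs : 1 / 2 < s.re) (ht : 25 ≤ |s.im|) : Z1 s ≠ 0 := by
  intro hZ
  have denominator_ne := mul_ne_zero (chi_two_mul_ne_zero hs.le) (f1_ne_zero hs.le (by linarith))
  have ratio_eq : Z1Ratio s = 1 := by
    rw [Z1Ratio, ← sub_eq_zero.1 hZ, div_self denominator_ne]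
  simpa [ratio_eq] using norm_Z1Ratio_lt_one hs ht

lemma Z1_one_sub (s : ℂ) : Z1 (1 - s) = -Z1 s := by
  rw [Z1, Z1, ← chi_one_sub (2 * s), ← chi_one_sub (2 * s - 1)]
  ring_nf

theorem Z1_no_zero_strip_general (s : ℂ) (hs : s.re ≠ 1 / 2) (ht : 25 ≤ |s.im|) : Z1 s ≠ 0 := by
  rcases hs.lt_or_gt with hs | hs
  · rw [← neg_ne_zero, ← Z1_one_sub]
    exact Z1_ne_zero_of_half_lt (by rw [sub_re, one_re]; linarith) (by simpa using ht)
  · exact Z1_ne_zero_of_half_lt hs ht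

theorem Z1_no_zero_strip (s : ℂ) (h1 : 1 / 2 < s.re) (h2 : s.re < 20)
    (h3 : 25 ≤ |s.im|) : Z1 s ≠ 0 :=
  Z1_no_zero_strip_general s h1.ne' h3
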